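/- arXiv:2402.07816 — 2 statements merged into one kernel-verified Lean document; each statement's English description precedes it below -/
import Mathlib

section
/- Assume that the ideal I_δ ⊆ k[X] is nonzero, where δ := 1 ∈ N, and let b_f denote its monic generator (the Bernstein–Sato polynomial of f). Then b_f(−1) = 0, and, writing b_f(X) = (X + 1)·b̃(X) with b̃ ∈ k[X], for every integer q ≥ 0 the ideal I_{Ď^q(δ)} is the principal ideal of k[X] generated by (X + 1)·b̃(X − q). (That is, the b-function of ∂_t^q δ equals (s+1)·b̃_f(s − q).) -/
/-!
By induction `t^q ∂_t^q δ = (-1)^q (s + 1)⋯(s + q) δ`, and `t` is injective, normalizes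
`D⟨s, t⟩` and satisfies `t s = (s + 1) t`; so it suffices to find the `b`-function of `P_q δ`,
where `P_q = (s + 1)⋯(s + q)`. Put `W₀ = D[s] (f, ∂₁ f, ∂₂ f, …) f^s`. Then
`P_{q+1} u ∈ D⟨s, t⟩ t P_q δ` exactly when `u ∈ W₀`. On the one hand
`(s + 1) t P_q δ = P_{q+1} f δ` and `∂ᵢ t P_q δ = P_{q+1} ∂ᵢ(f) δ`. On the other hand `t P_q δ`
lies in the `(q + 1)`-st term of the filtration `W_{m+1} = (s + m + 1) W_m + D[s] f^(m+1) f^s`,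
which is stable under `t`, and modulo `s + m + 1` the elements of `W_{m+1}` lie in `R f^(m+1)`,
so that `(s + m + 1) u ∈ W_{m+1}` forces `u ∈ W_m`. As `f` is not a unit, the same description
of `W_{q+1}` modulo `s + q + 1` shows that the `b`-function of `P_q δ` vanishes at `-(q + 1)`;
hence it is `(s + q + 1) b̃(s)`, with `b̃` independent of `q`.
-/

open Polynomial

noncomputable section

section StableSpan

variable {k N : Type*} [CommRing k] [AddCommGroup N] [Module k N]

/-- A subspace `V` stable under every operator of a set `G`, i.e. a submodule over the algebra of
operators generated by `G`. -/
def IsStable (G : Set (Module.End k N)) (V : Submodule k N) : Prop :=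
  ∀ g ∈ G, V ∈ g.invtSubmodule

/-- The submodule generated by `S` over the algebra of operators generated by `G`, regarded as a
subspace: operators that only normalize that algebra can be applied to it. -/
def stableSpan (G : Set (Module.End k N)) (S : Set N) : Submodule k N :=
  (Submodule.span (Algebra.adjoin k G) S).restrictScalars k

variable {G : Set (Module.End k N)} {S : Set N} {V W : Submodule k N} {u v : N}

theorem IsStable.sup (hV : IsStable G V) (hW : IsStable G W) : IsStable G (V ⊔ W) :=
  fun g hg => Sublattice.sup_mem (hV g hg) (hW g hg)

theorem IsStable.apply_mem_of_mem_adjoin (hV : IsStable G V) {a : Module.End k N}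
    (ha : a ∈ Algebra.adjoin k G) (hv : v ∈ V) : a v ∈ V := by
  induction ha using Algebra.adjoin_induction generalizing v with
  | mem g hg => exact hV g hg hv
  | algebraMap c => exact V.smul_mem c hv
  | add _ _ _ _ iha ihb => exact V.add_mem (iha hv) (ihb hv)
  | mul _ _ _ _ iha ihb => exact iha (ihb hv)

theorem subset_stableSpan : S ⊆ stableSpan G S :=
  Submodule.subset_span

theorem isStable_stableSpan : IsStable G (stableSpan G S) := fun g hg _ hv =>
  Submodule.smul_mem _ (⟨g, Algebra.subset_adjoin hg⟩ : Algebra.adjoin k G) hv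

theorem stableSpan_le (hV : IsStable G V) (hS : S ⊆ V) : stableSpan G S ≤ V := by
  intro v hv
  induction hv using Submodule.span_induction with
  | mem v hv => exact hS hv
  | zero => exact V.zero_mem
  | add v w _ _ hv hw => exact V.add_mem hv hw
  | smul a v _ hv => exact hV.apply_mem_of_mem_adjoin a.2 hv

theorem self_mem_stableSpan_singleton : v ∈ stableSpan G {v} :=
  subset_stableSpan rfl

theorem mem_stableSpan_singleton :
    u ∈ stableSpan G {v} ↔ ∃ a ∈ Algebra.adjoin k G, u = a v :=
  Submodule.mem_span_singleton.trans <| by simp [Subalgebra.smul_def, eq_comm]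

end StableSpan

section CoeffDerivation

variable {k A : Type*} [CommRing k] [CommRing A] [Algebra k A]

/-- The derivation of `A[X]` that applies a derivation of `A` to every coefficient. -/
def coeffDerivation (δ : Derivation k A A) : Derivation k A[X] A[X] :=
  PolynomialModule.equivPolynomialSelf.compDer δ.mapCoeffs

variable (δ : Derivation k A A)

theorem coeffDerivation_C_mul_X_pow (a : A) (m : ℕ) :
    coeffDerivation δ (C a * X ^ m) = C (δ a) * X ^ m := by
  simp [coeffDerivation, C_mul_X_pow_eq_monomial, PolynomialModule.equivPolynomialSelf]

@[simp]
theorem coeff_coeffDerivation (p : A[X]) (m : ℕ) :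
    (coeffDerivation δ p).coeff m = δ (p.coeff m) :=
  rfl

theorem coeffDerivation_C (a : A) : coeffDerivation δ (C a) = C (δ a) := by
  simpa using coeffDerivation_C_mul_X_pow δ a 0

theorem coeffDerivation_map (q : k[X]) : coeffDerivation δ (q.map (algebraMap k A)) = 0 := by
  ext m
  simp

theorem coeffDerivation_taylor_one (p : A[X]) :
    coeffDerivation δ (taylor 1 p) = taylor 1 (coeffDerivation δ p) := by
  induction p using Polynomial.induction_on' with
  | add p q hp hq => simp only [map_add, hp, hq]
  | monomial m a =>
    have h := coeffDerivation_map δ ((X + 1) ^ m)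
    simp only [Polynomial.map_pow, Polynomial.map_add, map_X, Polynomial.map_one] at h
    rw [← C_mul_X_pow_eq_monomial, coeffDerivation_C_mul_X_pow, taylor_mul, taylor_mul, taylor_C,
      taylor_C, taylor_X_pow, C_1, Derivation.leibniz, h, coeffDerivation_C]
    simp [mul_comm]

end CoeffDerivation

section ShiftedPochhammer

/-- The polynomial `(X + 1)(X + 2)⋯(X + q)`, for which `t^q ∂_t^q = (-1)^q (s + 1)⋯(s + q)`. -/
def shiftedPochhammer (k : Type*) [CommRing k] (q : ℕ) : k[X] :=
  taylor 1 (ascPochhammer k q)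

variable (k : Type*) [CommRing k] (q : ℕ)

@[simp]
theorem shiftedPochhammer_zero : shiftedPochhammer k 0 = 1 := by
  simp [shiftedPochhammer]

theorem shiftedPochhammer_succ :
    shiftedPochhammer k (q + 1) = (X + ((q + 1 : ℕ) : k[X])) * shiftedPochhammer k q := by
  rw [shiftedPochhammer, ascPochhammer_succ_right, taylor_mul, shiftedPochhammer, mul_comm,
    taylor_apply (f := X + _)]
  simp [add_assoc, add_comm (1 : k[X])]

theorem shiftedPochhammer_succ_left :
    shiftedPochhammer k (q + 1) = (X + 1) * taylor 1 (shiftedPochhammer k q) := by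
  rw [shiftedPochhammer, ascPochhammer_succ_left, taylor_mul, shiftedPochhammer]
  simp [taylor_apply]

theorem map_shiftedPochhammer {A : Type*} [CommRing A] (φ : k →+* A) :
    (shiftedPochhammer k q).map φ = shiftedPochhammer A q := by
  simp [shiftedPochhammer]

theorem eval_shiftedPochhammer_ne_zero (k : Type*) [CommRing k] [IsDomain k] [CharZero k] (q : ℕ) :
    (shiftedPochhammer k q).eval (-((q + 1 : ℕ) : k)) ≠ 0 := by
  rw [shiftedPochhammer, taylor_eval, Ne, ascPochhammer_eval_eq_zero_iff]
  rintro ⟨m, hm, h⟩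
  push_cast at h
  have : (m : k) = q := by linear_combination h
  exact hm.ne (by exact_mod_cast this)

end ShiftedPochhammer

/-- The data behind the twisted module `A[X] = A[s] f^s`: an element `f` of a `k`-algebra `R`,
derivations `∂ᵢ` of `A` that restrict to derivations of `R`, and elements of `A` that serve as the
logarithmic derivatives `∂ᵢ f / f`. -/
structure TwistData (k R A ι : Type*) [CommRing k] [CommRing R] [CommRing A] [Algebra k R]
    [Algebra k A] [Algebra R A] where
  f : R
  baseDeriv : ι → Derivation k R R
  deriv : ι → Derivation k A A
  deriv_algebraMap : ∀ i r, deriv i (algebraMap R A r) = algebraMap R A (baseDeriv i r)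
  logDeriv : ι → A
  smul_logDeriv : ∀ i, f • logDeriv i = algebraMap R A (baseDeriv i f)

namespace TwistData

variable {k R A ι : Type*} [CommRing k] [CommRing R] [CommRing A] [Algebra k R] [Algebra k A]
  [Algebra R A] (B : TwistData k R A ι)

section Operators

/-- The action `∂ᵢ + s ∂ᵢ(f) / f` of `∂ᵢ` on `A[s] f^s`. -/
def L (i : ι) : Module.End k A[X] :=
  (coeffDerivation (B.deriv i)).toLinearMap + LinearMap.mulLeft k (X * C (B.logDeriv i))

/-- The action `p(s) ↦ f p(s + 1)` of `t` on `A[s] f^s`. -/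
def T : Module.End k A[X] :=
  (algebraMap R A B.f • taylor 1).restrictScalars k

theorem L_apply (i : ι) (p : A[X]) :
    B.L i p = coeffDerivation (B.deriv i) p + X * C (B.logDeriv i) * p :=
  rfl

theorem T_apply (p : A[X]) : B.T p = B.f • taylor 1 p :=
  algebraMap_smul A B.f _

theorem T_mul (p q : A[X]) : B.T (p * q) = taylor 1 p * B.T q := by
  rw [T_apply, T_apply, taylor_mul, mul_smul_comm]

theorem T_smul (r : R) (p : A[X]) : B.T (r • p) = r • B.T p := by
  rw [T_apply, T_apply, LinearMap.map_smul_of_tower, smul_comm]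

theorem T_X_mul (p : A[X]) : B.T (X * p) = (X + 1) * B.T p := by
  rw [T_mul, taylor_X, C_1]

theorem T_X_add_natCast_mul (m : ℕ) (p : A[X]) :
    B.T ((X + (m : A[X])) * p) = (X + ((m + 1 : ℕ) : A[X])) * B.T p := by
  rw [T_mul, taylor_apply]
  simp [add_assoc, add_comm (1 : A[X])]

theorem L_mul (i : ι) (p q : A[X]) :
    B.L i (p * q) = coeffDerivation (B.deriv i) p * q + p * B.L i q := by
  simp only [L_apply, Derivation.leibniz, smul_eq_mul]
  ring

theorem L_map_mul (i : ι) (q : k[X]) (p : A[X]) :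
    B.L i (q.map (algebraMap k A) * p) = q.map (algebraMap k A) * B.L i p := by
  rw [B.L_mul, coeffDerivation_map, zero_mul, zero_add]

theorem L_X_add_natCast_mul (i : ι) (m : ℕ) (p : A[X]) :
    B.L i ((X + (m : A[X])) * p) = (X + (m : A[X])) * B.L i p := by
  have h := B.L_map_mul i (X + (m : k[X])) p
  rwa [Polynomial.map_add, map_X, Polynomial.map_natCast] at h

theorem L_smul (i : ι) (r : R) (p : A[X]) :
    B.L i (r • p) = B.baseDeriv i r • p + r • B.L i p := by
  have h := B.L_mul i (C (algebraMap R A r)) p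
  rw [coeffDerivation_C, B.deriv_algebraMap] at h
  simpa only [← smul_eq_C_mul, algebraMap_smul] using h

theorem smul_L_one (i : ι) : B.f • B.L i 1 = X * (B.baseDeriv i B.f • 1) := by
  rw [L_apply, Derivation.map_one_eq_zero, zero_add, mul_one, ← mul_smul_comm, smul_C,
    B.smul_logDeriv, ← algebraMap_smul A, smul_eq_C_mul, mul_one]

theorem L_T (i : ι) (p : A[X]) : B.L i (B.T p) = B.T (B.L i p) := by
  have h : B.f • C (B.logDeriv i) = C (algebraMap R A (B.baseDeriv i B.f)) := by
    rw [smul_C, B.smul_logDeriv]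
  rw [T_apply, L_smul, T_apply, L_apply, L_apply, coeffDerivation_taylor_one, map_add, taylor_mul,
    taylor_mul, taylor_X, taylor_C, ← algebraMap_smul A (B.baseDeriv i B.f), smul_eq_C_mul, ← h]
  simp only [C_1, ← algebraMap_smul A B.f, smul_eq_C_mul]
  ring

theorem T_pow_smul_one (m : ℕ) : B.T (B.f ^ m • 1) = B.f ^ (m + 1) • 1 := by
  rw [T_smul, T_apply, taylor_one, C_1, smul_smul, pow_succ]

/-- In terms of `f^s`: `∂ᵢ f^(s + m + 1) = (s + m + 1) ∂ᵢ(f) f^(s + m)`. -/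
theorem L_pow_smul_one (i : ι) (m : ℕ) :
    B.L i (B.f ^ (m + 1) • 1) =
      (X + ((m + 1 : ℕ) : A[X])) * ((B.baseDeriv i B.f * B.f ^ m) • 1) := by
  induction m with
  | zero =>
    rw [zero_add, pow_one, L_smul, smul_L_one, pow_zero, mul_one, Nat.cast_one]
    ring
  | succ m ih =>
    rw [← T_pow_smul_one, L_T, ih, T_X_add_natCast_mul, mul_smul, T_smul, T_pow_smul_one, mul_smul]

theorem T_injective (hf : IsSMulRegular A[X] (algebraMap R A B.f)) : Function.Injective B.T :=
  hf.comp (taylor_injective 1)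

theorem eq_L {i : ι} {D : Module.End k A[X]}
    (hD : ∀ a m, D (C a * X ^ m) =
      C (B.deriv i a) * X ^ m + X * C (B.logDeriv i) * (C a * X ^ m)) : D = B.L i := by
  refine LinearMap.ext fun p => ?_
  induction p using Polynomial.induction_on' with
  | add p q hp hq => rw [map_add, map_add, hp, hq]
  | monomial m a =>
    rw [← C_mul_X_pow_eq_monomial, hD, L_apply, coeffDerivation_C_mul_X_pow]

theorem eq_T {t : Module.End k A[X]} (ht : ∀ p, t p = C (algebraMap R A B.f) * p.comp (X + 1)) :
    t = B.T := by
  refine LinearMap.ext fun p => ?_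
  rw [ht, T_apply, taylor_apply, C_1, ← algebraMap_smul A, smul_eq_C_mul]

theorem T_neg_X_mul_comp {g : A} (hg : algebraMap R A B.f * g = 1) (p : A[X]) :
    B.T (-(X * C g * p.comp (X - 1))) = -((X + 1) * p) := by
  have hp : taylor 1 (p.comp (X - 1)) = p := by
    rw [taylor_apply, comp_assoc, sub_comp, X_comp, one_comp, C_1, add_sub_cancel_right, comp_X]
  rw [map_neg, T_apply, taylor_mul, hp, taylor_mul, taylor_X, taylor_C, C_1, ← smul_mul_assoc,
    ← mul_smul_comm, smul_C, Algebra.smul_def, hg, C_1, mul_one]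

theorem T_pow_apply_pow_apply {D : Module.End k A[X]} (hD : ∀ p, B.T (D p) = -((X + 1) * p))
    (q : ℕ) (p : A[X]) :
    (B.T ^ q) ((D ^ q) p) = (-1 : kˣ) ^ q • (shiftedPochhammer A q * p) := by
  induction q generalizing p with
  | zero => simp
  | succ q ih =>
    rw [pow_succ' B.T, pow_succ D, Module.End.mul_apply, Module.End.mul_apply, ih,
      LinearMap.map_smul_of_tower, T_mul, hD, shiftedPochhammer_succ_left, pow_succ, mul_smul,
      Units.neg_smul, one_smul]
    ring_nf

end Operators

section Stability

/-- Generators of the algebra `D[s]` acting on `A[s] f^s`. -/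
def diffGens : Set (Module.End k A[X]) :=
  Set.range (fun r : R => LinearMap.mulLeft k (C (algebraMap R A r))) ∪ Set.range B.L ∪
    {LinearMap.mulLeft k X}

/-- Generators of the algebra `D⟨s, t⟩` acting on `A[s] f^s`. -/
def opGens : Set (Module.End k A[X]) :=
  insert B.T B.diffGens

variable {B} {V : Submodule k A[X]} {p v : A[X]}

theorem isStable_diffGens_iff :
    IsStable B.diffGens V ↔
      (∀ r : R, ∀ p ∈ V, r • p ∈ V) ∧ (∀ i, ∀ p ∈ V, B.L i p ∈ V) ∧ ∀ p ∈ V, X * p ∈ V := by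
  simp only [IsStable, diffGens, Set.mem_union, Set.mem_range, Set.mem_singleton_iff, or_imp,
    forall_and, forall_eq, forall_exists_index, forall_apply_eq_imp_iff, and_assoc,
    Module.End.mem_invtSubmodule_iff_forall_mem_of_mem, LinearMap.mulLeft_apply, ← smul_eq_C_mul,
    algebraMap_smul]

theorem isStable_opGens_iff :
    IsStable B.opGens V ↔ (∀ p ∈ V, B.T p ∈ V) ∧ IsStable B.diffGens V :=
  Set.forall_mem_insert

theorem map_mul_mem (hV : ∀ p ∈ V, X * p ∈ V) (q : k[X]) (hp : p ∈ V) :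
    q.map (algebraMap k A) * p ∈ V := by
  have hX : IsStable {Algebra.lmul k A[X] X} V := by
    rintro _ rfl
    exact hV
  rw [← aeval_X_left_eq_map, ← LinearMap.mul_apply' (R := k), ← Algebra.coe_lmul_eq_mul,
    ← aeval_algHom_apply]
  exact hX.apply_mem_of_mem_adjoin (aeval_mem_adjoin_singleton k _) hp

end Stability

section Filtration

theorem isStable_map_mulLeft {V : Submodule k A[X]} (hV : IsStable B.diffGens V) (m : ℕ) :
    IsStable B.diffGens (V.map (LinearMap.mulLeft k (X + (m : A[X])))) := by
  obtain ⟨hR, hL, hX⟩ := isStable_diffGens_iff.1 hV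
  refine isStable_diffGens_iff.2 ⟨?_, ?_, ?_⟩
  · rintro r _ ⟨p, hp, rfl⟩
    exact ⟨r • p, hR r p hp, mul_smul_comm r _ p⟩
  · rintro i _ ⟨p, hp, rfl⟩
    exact ⟨B.L i p, hL i p hp, (B.L_X_add_natCast_mul i m p).symm⟩
  · rintro _ ⟨p, hp, rfl⟩
    exact ⟨X * p, hX p hp, mul_left_comm _ _ p⟩

/-- The `D[s]`-submodule generated by `f^m (f, ∂₁ f, ∂₂ f, …) f^s`. -/
def jacobianSpan (m : ℕ) : Submodule k A[X] :=
  stableSpan B.diffGens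
    (insert (B.f ^ (m + 1) • 1) (Set.range fun i => (B.baseDeriv i B.f * B.f ^ m) • 1))

/-- A decreasing sequence of `D[s]`-submodules which `t` shifts by one; its first term
`D[s] (f, ∂₁ f, ∂₂ f, …) f^s` is the one that defines the reduced Bernstein–Sato polynomial. -/
def tFiltration : ℕ → Submodule k A[X]
  | 0 => B.jacobianSpan 0
  | m + 1 => (tFiltration m).map (LinearMap.mulLeft k (X + ((m + 1 : ℕ) : A[X]))) ⊔
      stableSpan B.diffGens {B.f ^ (m + 1) • 1}

theorem isStable_jacobianSpan (m : ℕ) : IsStable B.diffGens (B.jacobianSpan m) :=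
  isStable_stableSpan

theorem pow_smul_one_mem_jacobianSpan (m : ℕ) : B.f ^ (m + 1) • 1 ∈ B.jacobianSpan m :=
  subset_stableSpan (Set.mem_insert _ _)

theorem isStable_tFiltration (m : ℕ) : IsStable B.diffGens (B.tFiltration m) := by
  induction m with
  | zero => exact B.isStable_jacobianSpan 0
  | succ m ih => exact (B.isStable_map_mulLeft ih (m + 1)).sup isStable_stableSpan

theorem X_add_natCast_mul_mem_tFiltration {m : ℕ} {p : A[X]} (hp : p ∈ B.tFiltration m) :
    (X + ((m + 1 : ℕ) : A[X])) * p ∈ B.tFiltration (m + 1) :=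
  Submodule.mem_sup_left ⟨p, hp, rfl⟩

theorem pow_smul_one_mem_tFiltration_succ (m : ℕ) :
    B.f ^ (m + 1) • 1 ∈ B.tFiltration (m + 1) :=
  Submodule.mem_sup_right self_mem_stableSpan_singleton

theorem jacobianSpan_le_tFiltration (m : ℕ) : B.jacobianSpan m ≤ B.tFiltration m := by
  cases m with
  | zero => exact le_rfl
  | succ m =>
    have hR := (isStable_diffGens_iff.1 (B.isStable_tFiltration (m + 1))).1
    have hf := B.pow_smul_one_mem_tFiltration_succ m
    refine stableSpan_le (B.isStable_tFiltration _) (Set.insert_subset ?_ ?_)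
    · rw [pow_succ', mul_smul]
      exact hR _ _ hf
    · rintro _ ⟨i, rfl⟩
      dsimp only
      rw [mul_smul]
      exact hR _ _ hf

theorem tFiltration_succ_le (m : ℕ) : B.tFiltration (m + 1) ≤ B.tFiltration m := by
  refine sup_le ?_ (stableSpan_le (B.isStable_tFiltration m) ?_)
  · rintro _ ⟨p, hp, rfl⟩
    have h := map_mul_mem (isStable_diffGens_iff.1 (B.isStable_tFiltration m)).2.2
      (X + ((m + 1 : ℕ) : k[X])) hp
    rwa [Polynomial.map_add, map_X, Polynomial.map_natCast] at h
  · rw [Set.singleton_subset_iff]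
    exact B.jacobianSpan_le_tFiltration m (B.pow_smul_one_mem_jacobianSpan m)

theorem isStable_comap_T {V : Submodule k A[X]} (hV : IsStable B.diffGens V) :
    IsStable B.diffGens (V.comap B.T) := by
  obtain ⟨hR, hL, hX⟩ := isStable_diffGens_iff.1 hV
  refine isStable_diffGens_iff.2 ⟨fun r p hp => ?_, fun i p hp => ?_, fun p hp => ?_⟩ <;>
    rw [Submodule.mem_comap] at hp ⊢
  · rw [T_smul]
    exact hR r _ hp
  · rw [← L_T]
    exact hL i _ hp
  · rw [T_X_mul, add_mul, one_mul]
    exact V.add_mem (hX _ hp) hp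

theorem isStable_map_T {V : Submodule k A[X]} (hV : IsStable B.diffGens V) :
    IsStable B.diffGens (V.map B.T) := by
  obtain ⟨hR, hL, hX⟩ := isStable_diffGens_iff.1 hV
  refine isStable_diffGens_iff.2 ⟨?_, ?_, ?_⟩
  · rintro r _ ⟨p, hp, rfl⟩
    exact ⟨r • p, hR r p hp, B.T_smul r p⟩
  · rintro i _ ⟨p, hp, rfl⟩
    exact ⟨B.L i p, hL i p hp, (B.L_T i p).symm⟩
  · rintro _ ⟨p, hp, rfl⟩
    exact ⟨X * p - p, V.sub_mem (hX p hp) hp, by rw [map_sub, T_X_mul]; ring⟩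

theorem map_T_stableSpan_singleton (v : A[X]) :
    (stableSpan B.opGens {v}).map B.T = stableSpan B.opGens {B.T v} := by
  refine le_antisymm ?_ ?_
  · obtain ⟨hT, hD⟩ := isStable_opGens_iff.1 (isStable_stableSpan (G := B.opGens) (S := {B.T v}))
    exact Submodule.map_le_iff_le_comap.2 <| stableSpan_le
      (isStable_opGens_iff.2 ⟨fun p hp => hT _ hp, B.isStable_comap_T hD⟩)
      (Set.singleton_subset_iff.2 self_mem_stableSpan_singleton)
  · obtain ⟨hT, hD⟩ := isStable_opGens_iff.1 (isStable_stableSpan (G := B.opGens) (S := {v}))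
    refine stableSpan_le (isStable_opGens_iff.2 ⟨?_, B.isStable_map_T hD⟩)
      (Set.singleton_subset_iff.2 ⟨v, self_mem_stableSpan_singleton, rfl⟩)
    rintro _ ⟨p, hp, rfl⟩
    exact ⟨B.T p, hT p hp, rfl⟩

theorem jacobianSpan_le_comap_T (m : ℕ) :
    B.jacobianSpan m ≤ (B.jacobianSpan (m + 1)).comap B.T := by
  refine stableSpan_le (B.isStable_comap_T (B.isStable_jacobianSpan _)) (Set.insert_subset ?_ ?_)
  · rw [SetLike.mem_coe, Submodule.mem_comap, T_pow_smul_one]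
    exact B.pow_smul_one_mem_jacobianSpan (m + 1)
  · rintro _ ⟨i, rfl⟩
    rw [SetLike.mem_coe, Submodule.mem_comap]
    refine subset_stableSpan (Set.mem_insert_of_mem _ ⟨i, ?_⟩)
    dsimp only
    rw [mul_smul, mul_smul, T_smul, T_pow_smul_one]

theorem tFiltration_le_comap_T (m : ℕ) :
    B.tFiltration m ≤ (B.tFiltration (m + 1)).comap B.T := by
  induction m with
  | zero =>
    exact (B.jacobianSpan_le_comap_T 0).trans
      (Submodule.comap_mono (B.jacobianSpan_le_tFiltration 1))
  | succ m ih =>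
    refine sup_le ?_ (stableSpan_le (B.isStable_comap_T (B.isStable_tFiltration _)) ?_)
    · rintro _ ⟨p, hp, rfl⟩
      rw [LinearMap.mulLeft_apply, Submodule.mem_comap, T_X_add_natCast_mul]
      exact B.X_add_natCast_mul_mem_tFiltration (ih hp)
    · rw [Set.singleton_subset_iff, SetLike.mem_coe, Submodule.mem_comap, T_pow_smul_one]
      exact B.pow_smul_one_mem_tFiltration_succ (m + 1)

theorem isStable_opGens_tFiltration_succ (m : ℕ) :
    IsStable B.opGens (B.tFiltration (m + 1)) :=
  isStable_opGens_iff.2 ⟨fun _ hp => B.tFiltration_succ_le _ (B.tFiltration_le_comap_T _ hp),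
    B.isStable_tFiltration _⟩

theorem stableSpan_pow_smul_one_le [IsScalarTower k R A] (m : ℕ) :
    stableSpan B.diffGens {B.f ^ (m + 1) • 1} ≤
      (B.jacobianSpan m).map (LinearMap.mulLeft k (X + ((m + 1 : ℕ) : A[X]))) ⊔
        (Submodule.span R {B.f ^ (m + 1) • (1 : A[X])}).restrictScalars k := by
  set F : A[X] := B.f ^ (m + 1) • 1
  set V := (B.jacobianSpan m).map (LinearMap.mulLeft k (X + ((m + 1 : ℕ) : A[X])))
  have hmem {p : A[X]} : p ∈ V ⊔ (Submodule.span R {F}).restrictScalars k ↔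
      ∃ v ∈ V, ∃ a : R, v + a • F = p := by
    simp [Submodule.mem_sup, Submodule.mem_span_singleton]
  obtain ⟨hR₀, -, -⟩ := isStable_diffGens_iff.1 (B.isStable_jacobianSpan m)
  obtain ⟨hR, hL, hX⟩ := isStable_diffGens_iff.1
    (B.isStable_map_mulLeft (B.isStable_jacobianSpan m) (m + 1))
  have hE {p : A[X]} (hp : p ∈ B.jacobianSpan m) :
      (X + ((m + 1 : ℕ) : A[X])) * p ∈ V := ⟨p, hp, rfl⟩
  refine stableSpan_le (isStable_diffGens_iff.2 ⟨fun r p hp => ?_, fun i p hp => ?_,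
    fun p hp => ?_⟩) (Set.singleton_subset_iff.2 (hmem.2 ⟨0, V.zero_mem, 1, by simp⟩))
  all_goals
    obtain ⟨v, hv, a, rfl⟩ := hmem.1 hp
    rw [hmem]
  · exact ⟨r • v, hR r v hv, r * a, by rw [smul_add, mul_smul]⟩
  · refine ⟨B.L i v + _, V.add_mem (hL i v hv) (hE (hR₀ a _ (subset_stableSpan (.inr ⟨i, rfl⟩)))),
      B.baseDeriv i a, ?_⟩
    rw [map_add, L_smul, L_pow_smul_one, mul_smul_comm]
    ring
  · refine ⟨X * v + _, V.add_mem (hX v hv) (hE (hR₀ a F (B.pow_smul_one_mem_jacobianSpan m))),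
      -((m + 1 : ℕ) * a), ?_⟩
    rw [neg_smul, mul_smul, Nat.cast_smul_eq_nsmul, nsmul_eq_mul]
    ring

theorem exists_of_mem_tFiltration_succ [IsScalarTower k R A] {m : ℕ} {p : A[X]}
    (hp : p ∈ B.tFiltration (m + 1)) :
    ∃ w ∈ B.tFiltration m, ∃ r : R,
      p = (X + ((m + 1 : ℕ) : A[X])) * w + (r * B.f ^ (m + 1)) • 1 := by
  have hle := sup_le le_sup_left ((B.stableSpan_pow_smul_one_le m).trans
    (sup_le_sup_right (Submodule.map_mono (B.jacobianSpan_le_tFiltration m)) _))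
  obtain ⟨_, ⟨w, hw, rfl⟩, v, hv, rfl⟩ := Submodule.mem_sup.1 (hle hp)
  obtain ⟨r, rfl⟩ := Submodule.mem_span_singleton.1 hv
  exact ⟨w, hw, r, by rw [mul_smul, LinearMap.mulLeft_apply]⟩

theorem mem_tFiltration_of_X_add_natCast_mul_mem [IsScalarTower k R A] {m : ℕ} {u : A[X]}
    (hu : (X + ((m + 1 : ℕ) : A[X])) * u ∈ B.tFiltration (m + 1)) : u ∈ B.tFiltration m := by
  obtain ⟨w, hw, r, h⟩ := B.exists_of_mem_tFiltration_succ hu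
  have hr : (r * B.f ^ (m + 1)) • (1 : A) = 0 := by
    simpa using (congr_arg (eval (-((m + 1 : ℕ) : A))) h).symm
  have hr' : (r * B.f ^ (m + 1)) • (1 : A[X]) = 0 := by rw [← C_1, smul_C, hr, C_0]
  rw [hr', add_zero, ← C_eq_natCast] at h
  rwa [(monic_X_add_C _).isRegular.left h]

theorem mem_tFiltration_zero_of_shiftedPochhammer_mul_mem [IsScalarTower k R A] {q : ℕ} {u : A[X]}
    (hu : shiftedPochhammer A q * u ∈ B.tFiltration q) : u ∈ B.tFiltration 0 := by
  induction q with
  | zero => simpa using hu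
  | succ q ih =>
    rw [shiftedPochhammer_succ, mul_assoc] at hu
    exact ih (B.mem_tFiltration_of_X_add_natCast_mul_mem hu)

theorem T_shiftedPochhammer_mem_tFiltration (q : ℕ) :
    B.T (shiftedPochhammer A q) ∈ B.tFiltration (q + 1) := by
  induction q with
  | zero => simpa [T_apply] using B.pow_smul_one_mem_tFiltration_succ 0
  | succ q ih =>
    rw [shiftedPochhammer_succ, T_X_add_natCast_mul]
    exact B.X_add_natCast_mul_mem_tFiltration ih

theorem stableSpan_T_shiftedPochhammer_le (q : ℕ) :
    stableSpan B.opGens {B.T (shiftedPochhammer A q)} ≤ B.tFiltration (q + 1) :=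
  stableSpan_le (B.isStable_opGens_tFiltration_succ q)
    (Set.singleton_subset_iff.2 (B.T_shiftedPochhammer_mem_tFiltration q))

theorem X_add_one_mul_T_shiftedPochhammer (q : ℕ) :
    (X + 1) * B.T (shiftedPochhammer A q) = B.f • shiftedPochhammer A (q + 1) := by
  rw [shiftedPochhammer_succ_left, T_apply, mul_smul_comm]

theorem L_T_shiftedPochhammer (i : ι) (q : ℕ) :
    B.L i (B.T (shiftedPochhammer A q)) =
      B.baseDeriv i B.f • shiftedPochhammer A (q + 1) := by
  have hL : B.L i (shiftedPochhammer A q * 1) = shiftedPochhammer A q * B.L i 1 := by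
    rw [← map_shiftedPochhammer k q (algebraMap k A), L_map_mul]
  have hT : B.L i (B.T 1) = (X + 1) * (B.baseDeriv i B.f • 1) := by
    simpa [T_apply] using B.L_pow_smul_one i 0
  calc B.L i (B.T (shiftedPochhammer A q))
      = taylor 1 (shiftedPochhammer A q) * B.L i (B.T 1) := by
        rw [L_T, L_T, ← T_mul, ← hL, mul_one]
    _ = B.baseDeriv i B.f • shiftedPochhammer A (q + 1) := by
        rw [hT, shiftedPochhammer_succ_left, mul_smul_comm, mul_smul_comm, mul_one, mul_comm]

theorem isStable_comap_map_mul {V : Submodule k A[X]} (hV : IsStable B.diffGens V) (q : k[X]) :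
    IsStable B.diffGens (V.comap (LinearMap.mulLeft k (q.map (algebraMap k A)))) := by
  obtain ⟨hR, hL, hX⟩ := isStable_diffGens_iff.1 hV
  refine isStable_diffGens_iff.2 ⟨fun r p hp => ?_, fun i p hp => ?_, fun p hp => ?_⟩ <;>
    rw [Submodule.mem_comap, LinearMap.mulLeft_apply] at hp ⊢
  · rw [mul_smul_comm]
    exact hR r _ hp
  · rw [← L_map_mul]
    exact hL i _ hp
  · rw [mul_left_comm]
    exact hX _ hp

theorem shiftedPochhammer_mul_mem_stableSpan {q : ℕ} {u : A[X]} (hu : u ∈ B.tFiltration 0) :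
    shiftedPochhammer A (q + 1) * u ∈ stableSpan B.opGens {B.T (shiftedPochhammer A q)} := by
  set V := stableSpan B.opGens {B.T (shiftedPochhammer A q)}
  have hV : IsStable B.diffGens V := (isStable_opGens_iff.1 isStable_stableSpan).2
  obtain ⟨-, hL, hX⟩ := isStable_diffGens_iff.1 hV
  have hT : B.T (shiftedPochhammer A q) ∈ V := self_mem_stableSpan_singleton
  have hle : B.tFiltration 0 ≤ V.comap (LinearMap.mulLeft k (shiftedPochhammer A (q + 1))) := by
    rw [← map_shiftedPochhammer k (q + 1) (algebraMap k A)]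
    refine stableSpan_le (B.isStable_comap_map_mul hV _) (Set.insert_subset ?_ ?_)
    · simpa [-smul_add, map_shiftedPochhammer, ← X_add_one_mul_T_shiftedPochhammer, add_mul] using
        V.add_mem (hX _ hT) hT
    · rintro _ ⟨i, rfl⟩
      simpa [map_shiftedPochhammer, ← L_T_shiftedPochhammer] using hL i _ hT
  exact hle hu

theorem shiftedPochhammer_mul_mem_stableSpan_iff [IsScalarTower k R A] {q : ℕ} {u : A[X]} :
    shiftedPochhammer A (q + 1) * u ∈ stableSpan B.opGens {B.T (shiftedPochhammer A q)} ↔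
      u ∈ B.tFiltration 0 :=
  ⟨fun hu => B.mem_tFiltration_zero_of_shiftedPochhammer_mul_mem
    (B.stableSpan_T_shiftedPochhammer_le q hu), B.shiftedPochhammer_mul_mem_stableSpan⟩

end Filtration

section BIdeal

variable {B} in
theorem map_mul_mem_stableSpan {v : A[X]} {S : Set A[X]} (b : k[X])
    (hv : v ∈ stableSpan B.opGens S) :
    b.map (algebraMap k A) * v ∈ stableSpan B.opGens S :=
  map_mul_mem (isStable_diffGens_iff.1 (isStable_opGens_iff.1 isStable_stableSpan).2).2.2 b hv

/-- The ideal of the polynomials `b(s)` with `b(s) v ∈ D⟨s, t⟩ t v`. -/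
def bIdeal (v : A[X]) : Ideal k[X] where
  carrier := {b | b.map (algebraMap k A) * v ∈ stableSpan B.opGens {B.T v}}
  zero_mem' := by simp
  add_mem' ha hb := by simpa [add_mul] using add_mem ha hb
  smul_mem' c b hb := by simpa [mul_assoc] using map_mul_mem_stableSpan c hb

/-- The reduced Bernstein–Sato ideal: the polynomials `c(s)` with
`c(s) f^s ∈ D[s] (f, ∂₁ f, ∂₂ f, …) f^s`. -/
def reducedBIdeal : Ideal k[X] where
  carrier := {c | c.map (algebraMap k A) ∈ B.tFiltration 0}
  zero_mem' := by simp
  add_mem' ha hb := by simpa using add_mem ha hb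
  smul_mem' c _ hb := by
    simpa using map_mul_mem (isStable_diffGens_iff.1 (B.isStable_tFiltration 0)).2.2 c hb

variable {B} {v : A[X]} {b : k[X]}

theorem mem_bIdeal :
    b ∈ B.bIdeal v ↔ b.map (algebraMap k A) * v ∈ stableSpan B.opGens {B.T v} :=
  Iff.rfl

theorem bIdeal_units_smul (c : kˣ) (v : A[X]) : B.bIdeal (c • v) = B.bIdeal v := by
  have hle (c : kˣ) (v : A[X]) : B.bIdeal v ≤ B.bIdeal (c • v) := fun b hb => by
    have hT : stableSpan B.opGens {B.T v} ≤ stableSpan B.opGens {B.T (c • v)} := by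
      refine stableSpan_le isStable_stableSpan (Set.singleton_subset_iff.2 ?_)
      rw [← inv_smul_smul c (B.T v), ← LinearMap.map_smul_of_tower]
      exact Submodule.smul_mem _ _ self_mem_stableSpan_singleton
    rw [mem_bIdeal, mul_smul_comm]
    exact Submodule.smul_mem _ _ (hT hb)
  exact le_antisymm (by simpa using hle c⁻¹ (c • v)) (hle c v)

theorem X_add_natCast_mul_mem_bIdeal_iff [IsScalarTower k R A] {q : ℕ} {c : k[X]} :
    (X + ((q + 1 : ℕ) : k[X])) * c ∈ B.bIdeal (shiftedPochhammer A q) ↔ c ∈ B.reducedBIdeal := by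
  rw [mem_bIdeal, Polynomial.map_mul, Polynomial.map_add, map_X, Polynomial.map_natCast,
    mul_right_comm, ← shiftedPochhammer_succ, shiftedPochhammer_mul_mem_stableSpan_iff]
  rfl

theorem taylor_one_mem_bIdeal_T_iff (hT : Function.Injective B.T) :
    taylor 1 b ∈ B.bIdeal (B.T v) ↔ b ∈ B.bIdeal v := by
  rw [mem_bIdeal, mem_bIdeal, map_taylor, map_one, ← T_mul, ← map_T_stableSpan_singleton]
  exact hT.mem_set_image

theorem taylor_natCast_mem_bIdeal_T_pow_iff (hT : Function.Injective B.T) (q : ℕ) :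
    taylor (q : k) b ∈ B.bIdeal ((B.T ^ q) v) ↔ b ∈ B.bIdeal v := by
  induction q with
  | zero => simp
  | succ q ih =>
    rw [pow_succ', Module.End.mul_apply, Nat.cast_succ, ← ih,
      ← taylor_one_mem_bIdeal_T_iff hT (b := taylor (q : k) b), taylor_taylor, add_comm]

end BIdeal

section Field

variable {k R A ι : Type*} [Field k] [CharZero k] [CommRing R] [CommRing A] [Algebra k R]
  [Algebra k A] [Algebra R A] [IsScalarTower k R A] (B : TwistData k R A ι)

/-- Evaluating at `s = -(q + 1)` sends `D⟨s, t⟩ t (s + 1)⋯(s + q) f^s` into `R f^(q + 1)`. -/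
theorem eval_eq_zero_of_mem_bIdeal (hR : Function.Injective (algebraMap R A))
    (hf : ¬ IsUnit B.f) {q : ℕ} {b : k[X]} (hb : b ∈ B.bIdeal (shiftedPochhammer A q)) :
    b.eval (-((q + 1 : ℕ) : k)) = 0 := by
  by_contra hb0
  obtain ⟨w, -, r, h⟩ := B.exists_of_mem_tFiltration_succ (B.stableSpan_T_shiftedPochhammer_le q hb)
  set c : k := (b * shiftedPochhammer k q).eval (-((q + 1 : ℕ) : k)) with hc_def
  have hc : c ≠ 0 := by
    rw [hc_def, eval_mul]
    exact mul_ne_zero hb0 (eval_shiftedPochhammer_ne_zero k q)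
  have hcr : algebraMap R A (algebraMap k R c) = algebraMap R A (r * B.f ^ (q + 1)) := by
    have heval := congr_arg (eval (-((q + 1 : ℕ) : A))) h
    rw [← map_shiftedPochhammer k q (algebraMap k A), ← Polynomial.map_mul, eval_add, eval_mul,
      eval_add, eval_X, eval_natCast, neg_add_cancel, zero_mul, zero_add, eval_smul, eval_one,
      ← Algebra.algebraMap_eq_smul_one] at heval
    rw [← heval, ← IsScalarTower.algebraMap_apply, hc_def, ← eval_map_apply, map_neg, map_natCast]
  have hunit : IsUnit (r * B.f ^ (q + 1)) := hR hcr ▸ hc.isUnit.map (algebraMap k R)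
  exact hf ((isUnit_pow_iff q.succ_ne_zero).1 (isUnit_of_mul_isUnit_right hunit))

theorem mem_bIdeal_shiftedPochhammer_iff (hR : Function.Injective (algebraMap R A))
    (hf : ¬ IsUnit B.f) {q : ℕ} {b : k[X]} :
    b ∈ B.bIdeal (shiftedPochhammer A q) ↔
      ∃ c ∈ B.reducedBIdeal, (X + ((q + 1 : ℕ) : k[X])) * c = b := by
  refine ⟨fun hb => ?_, ?_⟩
  · obtain ⟨c, rfl⟩ := dvd_iff_isRoot.2 (B.eval_eq_zero_of_mem_bIdeal hR hf hb)
    rw [C_neg, sub_neg_eq_add, C_eq_natCast] at hb ⊢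
    exact ⟨c, X_add_natCast_mul_mem_bIdeal_iff.1 hb, rfl⟩
  · rintro ⟨c, hc, rfl⟩
    exact X_add_natCast_mul_mem_bIdeal_iff.2 hc

theorem mem_bIdeal_pow_iff (hR : Function.Injective (algebraMap R A))
    (hf : ¬ IsUnit B.f) (hT : Function.Injective B.T) {D : Module.End k A[X]}
    (hD : ∀ p, B.T (D p) = -((X + 1) * p)) {q : ℕ} {b : k[X]} :
    b ∈ B.bIdeal ((D ^ q) 1) ↔ ∃ c ∈ B.reducedBIdeal, (X + 1) * c.comp (X - C (q : k)) = b := by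
  have hshift (c : k[X]) : taylor (q : k) ((X + 1) * c.comp (X - C (q : k))) =
      (X + ((q + 1 : ℕ) : k[X])) * c := by
    rw [taylor_mul, taylor_apply, taylor_apply, comp_assoc]
    simp [add_assoc]
  rw [← taylor_natCast_mem_bIdeal_T_pow_iff hT q, B.T_pow_apply_pow_apply hD, mul_one,
    bIdeal_units_smul, B.mem_bIdeal_shiftedPochhammer_iff hR hf]
  simp only [← hshift, (taylor_injective (q : k)).eq_iff]

theorem bIdeal_pow_eq_span (hR : Function.Injective (algebraMap R A))
    (hf : ¬ IsUnit B.f) (hT : Function.Injective B.T) {D : Module.End k A[X]}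
    (hD : ∀ p, B.T (D p) = -((X + 1) * p)) {b : k[X]}
    (hb : B.bIdeal 1 = Ideal.span {(X + 1) * b}) (q : ℕ) :
    B.bIdeal ((D ^ q) 1) = Ideal.span {(X + 1) * b.comp (X - C (q : k))} := by
  have hX : (X + 1 : k[X]) ≠ 0 := by simpa using (monic_X_add_C (1 : k)).ne_zero
  have hmem (c : k[X]) : c ∈ B.reducedBIdeal ↔ (X + 1) * c ∈ B.bIdeal 1 := by
    simpa using (X_add_natCast_mul_mem_bIdeal_iff (B := B) (q := 0) (c := c)).symm
  ext c
  rw [B.mem_bIdeal_pow_iff hR hf hT hD, Ideal.mem_span_singleton]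
  simp only [hmem, hb, Ideal.mem_span_singleton, mul_dvd_mul_iff_left hX]
  constructor
  · rintro ⟨_, ⟨d, rfl⟩, rfl⟩
    exact ⟨d.comp (X - C (q : k)), by rw [mul_comp, mul_assoc]⟩
  · rintro ⟨d, rfl⟩
    exact ⟨b * d.comp (X + C (q : k)), dvd_mul_right _ _, by simp [comp_assoc, mul_assoc]⟩

end Field

/-- The twisting data of the localization `A = R[1/f]`. -/
def away {k R A ι : Type*} [CommRing k] [CommRing R] [CommRing A] [Algebra k R] [Algebra k A]
    [Algebra R A] (f : R) [IsLocalization.Away f A] (pd : ι → Derivation k A A)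
    (d : ι → Derivation k R R) (hpd : ∀ i r, pd i (algebraMap R A r) = algebraMap R A (d i r)) :
    TwistData k R A ι where
  f := f
  baseDeriv := d
  deriv := pd
  deriv_algebraMap := hpd
  logDeriv i := IsLocalization.Away.invSelf f * algebraMap R A (d i f)
  smul_logDeriv i := by
    rw [Algebra.smul_def, ← mul_assoc, IsLocalization.Away.mul_invSelf, one_mul]

end TwistData

end

theorem stmt18_general {k R A ι : Type*} [Field k] [CharZero k] [CommRing R] [Algebra k R]
    (f : R) (hf : f ∈ nonZeroDivisors R) (hfu : ¬ IsUnit f)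
    [CommRing A] [Algebra k A] [Algebra R A] [IsScalarTower k R A] [IsLocalization.Away f A]
    (pd : ι → Derivation k A A) (d : ι → Derivation k R R)
    (hpd : ∀ i r, pd i (algebraMap R A r) = algebraMap R A (d i r))
    (L : ι → Module.End k A[X])
    (hL : ∀ i a m, L i (C a * X ^ m) = C (pd i a) * X ^ m +
      X * C (IsLocalization.Away.invSelf f * algebraMap R A (d i f)) * (C a * X ^ m))
    (That : Module.End k A[X]) (hThat : ∀ p, That p = C (algebraMap R A f) * p.comp (X + 1))
    (Dhat : Module.End k A[X])
    (hDhat : ∀ p, Dhat p = -(X * C (IsLocalization.Away.invSelf f) * p.comp (X - 1)))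
    (A0 : Subalgebra k (Module.End k A[X]))
    (hA0 : A0 = Algebra.adjoin k
      ((Set.range fun r : R => LinearMap.mulLeft k (C (algebraMap R A r))) ∪ Set.range L ∪
        {LinearMap.mulLeft k X, That}))
    (I : A[X] → Set k[X])
    (hI : ∀ v, I v = {b | ∃ a ∈ A0, b.map (algebraMap k A) * v = a (That v)})
    (bf : k[X]) (hbf_mem : bf ∈ I 1) (hbf_gen : ∀ c ∈ I 1, bf ∣ c) :
    bf.eval (-1) = 0 ∧ ∀ bt : k[X], bf = (X + 1) * bt →
      ∀ q : ℕ, I ((Dhat ^ q) 1) = Ideal.span {(X + 1) * bt.comp (X - C (q : k))} := by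
  let B := TwistData.away f pd d hpd
  have hR : Function.Injective (algebraMap R A) :=
    IsLocalization.injective A (Submonoid.powers_le.2 hf)
  have hinj : Function.Injective B.T :=
    B.T_injective ((IsLocalization.Away.algebraMap_isUnit f).isSMulRegular _)
  have hT : That = B.T := B.eq_T hThat
  have hBL : L = B.L := funext fun i => B.eq_L (hL i)
  have hD (p : A[X]) : B.T (Dhat p) = -((X + 1) * p) := by
    rw [hDhat]
    exact B.T_neg_X_mul_comp (IsLocalization.Away.mul_invSelf f) p
  have hIB (v : A[X]) : I v = B.bIdeal v := by
    ext b
    rw [hI, SetLike.mem_coe, TwistData.mem_bIdeal, mem_stableSpan_singleton, TwistData.opGens,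
      TwistData.diffGens, ← Set.union_insert, ← hT, ← hBL, Set.pair_comm, ← hA0]
    rfl
  have hspan : B.bIdeal 1 = Ideal.span {bf} := by
    simp only [hIB] at hbf_mem hbf_gen
    exact le_antisymm (fun c hc => Ideal.mem_span_singleton.2 (hbf_gen c hc))
      ((Ideal.span_singleton_le_iff_mem _).2 hbf_mem)
  refine ⟨?_, ?_⟩
  · have hbf : bf ∈ B.bIdeal (shiftedPochhammer A 0) := by simp [hspan]
    simpa using B.eval_eq_zero_of_mem_bIdeal hR hfu hbf
  · rintro bt rfl q
    rw [hIB, B.bIdeal_pow_eq_span hR hfu hinj hD hspan]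

/-- **Theorem 10.6.** Let `f ∈ R = k[x₁,…,xₙ]` be nonzero and not a unit, and work in the
model `N = R_f[X]` of `ι_+(O_X[1/f]) ≅ R_f[s]f^s`, with the action of
`V⁰D_{X×A¹} = D_X⟨s,t⟩` generated by multiplications by elements of `R`, the twisted
operators `L_i` (action of `∂_{x_i}`), `mult_X` (action of `s = -∂_t t`) and
`T̂ : p ↦ f·p(X+1)` (action of `t`); `Ď : p ↦ -X·f⁻¹·p(X-1)` is the action of `∂_t`.
If the `b`-function ideal `I_δ` of `δ = 1` is nonzero with monic generator `b_f`, then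
`b_f(-1) = 0` and, writing `b_f = (X+1)·b̃`, for every `q ≥ 0` the ideal `I_{Ď^q δ}` is
the principal ideal generated by `(X+1)·b̃(X−q)`. -/
theorem stmt18 {k : Type*} [Field k] [IsAlgClosed k] [CharZero k]
    (n : ℕ) (hn : 1 ≤ n)
    (f : MvPolynomial (Fin n) k) (hf0 : f ≠ 0) (hfu : ¬ IsUnit f)
    -- the unique extensions of the partial derivatives to `k`-derivations of `R_f`
    (pd : Fin n → Derivation k (Localization.Away f) (Localization.Away f))
    (hpd : ∀ (i : Fin n) (r : MvPolynomial (Fin n) k),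
      pd i (algebraMap (MvPolynomial (Fin n) k) (Localization.Away f) r) =
        algebraMap (MvPolynomial (Fin n) k) (Localization.Away f)
          (MvPolynomial.pderiv i r))
    -- the twisted operators `L_i(u) = ∂_i(u) + X·f⁻¹·(∂f/∂x_i)·u`,
    -- with `∂_i` acting coefficientwise on `N = R_f[X]`
    (L : Fin n → Module.End k (Polynomial (Localization.Away f)))
    (hL : ∀ (i : Fin n) (a : Localization.Away f) (m : ℕ),
      L i (Polynomial.C a * Polynomial.X ^ m) =
        Polynomial.C (pd i a) * Polynomial.X ^ m +
          Polynomial.X * Polynomial.C (IsLocalization.Away.invSelf f *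
            algebraMap (MvPolynomial (Fin n) k) (Localization.Away f)
              (MvPolynomial.pderiv i f)) *
            (Polynomial.C a * Polynomial.X ^ m))
    -- the action `T̂(p) = f·p(X+1)` of `t`
    (That : Module.End k (Polynomial (Localization.Away f)))
    (hThat : ∀ p : Polynomial (Localization.Away f),
      That p = Polynomial.C
          (algebraMap (MvPolynomial (Fin n) k) (Localization.Away f) f) *
        p.comp (Polynomial.X + 1))
    -- the action `Ď(p) = -X·f⁻¹·p(X-1)` of `∂_t`
    (Dhat : Module.End k (Polynomial (Localization.Away f)))
    (hDhat : ∀ p : Polynomial (Localization.Away f),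
      Dhat p = -(Polynomial.X * Polynomial.C (IsLocalization.Away.invSelf f) *
        p.comp (Polynomial.X - 1)))
    -- the algebra of operators coming from `V⁰D_{X×A¹} = D_X⟨s,t⟩`
    (A0 : Subalgebra k (Module.End k (Polynomial (Localization.Away f))))
    (hA0 : A0 = Algebra.adjoin k
      ((Set.range fun r : MvPolynomial (Fin n) k =>
          (LinearMap.mulLeft k (Polynomial.C
              (algebraMap (MvPolynomial (Fin n) k) (Localization.Away f) r)) :
            Module.End k (Polynomial (Localization.Away f)))) ∪
        Set.range L ∪
        {(LinearMap.mulLeft k (Polynomial.X : Polynomial (Localization.Away f)) :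
            Module.End k (Polynomial (Localization.Away f))), That}))
    -- the `b`-function ideals `I_v = {b : b(X)·v ∈ A0·(T̂ v)}`
    (I : Polynomial (Localization.Away f) → Set (Polynomial k))
    (hI : ∀ v : Polynomial (Localization.Away f),
      I v = {b : Polynomial k | ∃ a ∈ A0,
        Polynomial.map (algebraMap k (Localization.Away f)) b * v = a (That v)})
    -- assume `I_δ ≠ 0`, with monic generator `b_f` (the Bernstein–Sato polynomial)
    (hne : ∃ b ∈ I (1 : Polynomial (Localization.Away f)), b ≠ 0)
    (bf : Polynomial k) (hbf_monic : bf.Monic)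
    (hbf_mem : bf ∈ I (1 : Polynomial (Localization.Away f)))
    (hbf_gen : ∀ c ∈ I (1 : Polynomial (Localization.Away f)), bf ∣ c) :
    Polynomial.eval (-1 : k) bf = 0 ∧
    ∀ bt : Polynomial k, bf = (Polynomial.X + 1) * bt →
      ∀ q : ℕ, I ((Dhat ^ q) (1 : Polynomial (Localization.Away f))) =
        ↑(Ideal.span {(Polynomial.X + 1) *
          bt.comp (Polynomial.X - Polynomial.C (q : k))}) := by
  exact stmt18_general f (mem_nonZeroDivisors_of_ne_zero hf0) hfu pd MvPolynomial.pderiv hpd L hL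
    That hThat Dhat hDhat A0 hA0 I hI bf hbf_mem hbf_gen
end

section
/- If a polynomial b ∈ k[X] satisfies b(X)·1 ∈ A·(f·1) := {a(f·1) : a ∈ A} (i.e., b(s)f^s ∈ D_R[s]·f·f^s, the functional equation defining the Bernstein–Sato polynomial), then b(−1) = 0. In particular, (s + 1) divides the Bernstein–Sato polynomial of f whenever it exists. -/
/-!
Set `s = -1`, so that `u·f^s` becomes `f⁻¹·u(-1) ∈ R_f`. Since `f⁻¹` satisfies the differential
equation `δ(f^s) = s·f⁻¹·δ(f)·f^s` at `s = -1`, this specialization intertwines `L_δ` with the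
derivation `δ'` of `R_f`; it also intertwines multiplication by `r` with itself and multiplication
by `s` with multiplication by `-1`. All of these operators on `R_f` preserve the image of `R`, and
`f·f^s` specializes to `1 ∈ R`, so every element of `D_R[s]·f·f^s` specializes into `R`. As
`b(s)f^s` specializes to `b(-1)·f⁻¹`, the functional equation forces `b(-1) ∈ fR`.
-/

open Polynomial Module.End nonZeroDivisors

theorem mem_invtSubmodule_of_mem_adjoin {k M : Type*} [CommSemiring k] [AddCommMonoid M]
    [Module k M] {s : Set (Module.End k M)} {p : Submodule k M}
    (hs : ∀ a ∈ s, p ∈ invtSubmodule a) {a : Module.End k M} (ha : a ∈ Algebra.adjoin k s) :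
    p ∈ invtSubmodule a := by
  induction ha using Algebra.adjoin_induction with
  | mem a ha => exact hs a ha
  | algebraMap c => exact fun _ hu ↦ p.smul_mem c hu
  | add _ _ _ _ ha hb => exact fun _ hu ↦ p.add_mem (ha hu) (hb hu)
  | mul _ _ _ _ ha hb => exact fun _ hu ↦ ha (hb hu)

section Specialization

variable {k R S : Type*} [CommRing k] [CommRing R] [CommRing S] [Algebra k R] [Algebra k S]
  [Algebra R S]

/-- `T` is the action of the derivation `D` on the module `S[s]·f^s`, where `u ∈ S[X]` stands for
`u·f^s` and `w` is the logarithmic derivative `f⁻¹·D f`: it sends `u` to `D(u) + X·w·u`, with `D`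
acting coefficientwise. The condition is stated on the terms `a·X^m`, which determine `T`. -/
def IsTwistedAction (D : Derivation k S S) (w : S) (T : Module.End k S[X]) : Prop :=
  ∀ (a : S) (m : ℕ), T (C a * X ^ m) = C (D a) * X ^ m + X * C w * (C a * X ^ m)

/-- The specialization `s = c` of the module `S[s]·f^s`, where `g ∈ S` plays the role of `f^c`:
it sends `u`, standing for `u·f^s`, to `g·u(c)`. -/
noncomputable def specialization (g : S) (c : k) : S[X] →ₗ[k] S :=
  LinearMap.mulLeft k g ∘ₗ (leval (algebraMap k S c)).restrictScalars k

theorem specialization_apply (g : S) (c : k) (u : S[X]) :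
    specialization g c u = g * u.eval (algebraMap k S c) :=
  rfl

theorem specialization_C (g : S) (c : k) (a : S) : specialization g c (C a) = g * a := by
  rw [specialization_apply, eval_C]

theorem specialization_C_mul (g : S) (c : k) (a : S) (u : S[X]) :
    specialization g c (C a * u) = a * specialization g c u := by
  rw [specialization_apply, specialization_apply, eval_mul, eval_C, mul_left_comm]

theorem specialization_X_mul (g : S) (c : k) (u : S[X]) :
    specialization g c (X * u) = c • specialization g c u := by
  rw [specialization_apply, specialization_apply, eval_mul, eval_X, mul_left_comm,
    Algebra.smul_def]

theorem specialization_map (g : S) (c : k) (b : k[X]) :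
    specialization g c (b.map (algebraMap k S)) = g * algebraMap k S (b.eval c) := by
  rw [specialization_apply, eval_map_algebraMap, aeval_algebraMap_apply_eq_algebraMap_eval]

theorem IsTwistedAction.specialization_apply {D : Derivation k S S} {w : S}
    {T : Module.End k S[X]} (hT : IsTwistedAction D w T) {g : S} {c : k}
    (hg : D g = c • (w * g)) (u : S[X]) :
    specialization g c (T u) = D (specialization g c u) := by
  induction u using Polynomial.induction_on' with
  | add p q hp hq => simp only [map_add, hp, hq]
  | monomial m a =>
    have hD : D (algebraMap k S c ^ m) = 0 := by rw [← map_pow, D.map_algebraMap]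
    rw [← C_mul_X_pow_eq_monomial, hT]
    simp only [_root_.specialization_apply, eval_add, eval_mul, eval_C, eval_pow, eval_X,
      D.leibniz, hD, hg, smul_eq_mul, Algebra.smul_def]
    ring

variable [IsScalarTower k R S]

variable (R) in
/-- The elements of `S[s]·f^s` whose specialization at `s = c` lies in (the image of) `R`. -/
noncomputable def integralSubmodule (g : S) (c : k) : Submodule k S[X] :=
  (LinearMap.range (IsScalarTower.toAlgHom k R S).toLinearMap).comap (specialization g c)

theorem mem_integralSubmodule {g : S} {c : k} {u : S[X]} :
    u ∈ integralSubmodule R g c ↔ ∃ r, algebraMap R S r = specialization g c u :=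
  Iff.rfl

theorem integralSubmodule_mem_invtSubmodule_mulLeft_C (g : S) (c : k) (r : R) :
    integralSubmodule R g c ∈ invtSubmodule (LinearMap.mulLeft k (C (algebraMap R S r))) := by
  rintro u ⟨t, ht : algebraMap R S t = _⟩
  refine mem_integralSubmodule.mpr ⟨r * t, ?_⟩
  rw [LinearMap.mulLeft_apply, specialization_C_mul, map_mul, ht]

theorem integralSubmodule_mem_invtSubmodule_mulLeft_X (g : S) (c : k) :
    integralSubmodule R g c ∈ invtSubmodule (LinearMap.mulLeft k (X : S[X])) := by
  rintro u ⟨t, ht : algebraMap R S t = _⟩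
  refine mem_integralSubmodule.mpr ⟨c • t, ?_⟩
  rw [LinearMap.mulLeft_apply, specialization_X_mul, ← ht]
  exact map_smul (IsScalarTower.toAlgHom k R S) c t

theorem IsTwistedAction.integralSubmodule_mem_invtSubmodule {δ : Derivation k R R}
    {D : Derivation k S S} (hD : ∀ r, D (algebraMap R S r) = algebraMap R S (δ r)) {w : S}
    {T : Module.End k S[X]} (hT : IsTwistedAction D w T) {g : S} {c : k}
    (hg : D g = c • (w * g)) :
    integralSubmodule R g c ∈ invtSubmodule T := by
  rintro u ⟨r, hr : algebraMap R S r = _⟩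
  refine mem_integralSubmodule.mpr ⟨δ r, ?_⟩
  rw [hT.specialization_apply hg, ← hr, hD]

end Specialization

theorem derivation_apply_eq_neg_one_smul_of_mul_eq_one {k S : Type*} [CommRing k]
    [CommRing S] [Algebra k S] (D : Derivation k S S) {g f : S} (h : g * f = 1) :
    D g = (-1 : k) • (g * D f * g) := by
  rw [D.leibniz_of_mul_eq_one h, smul_eq_mul, neg_one_smul]
  ring

theorem stmt19_general {k R S : Type*} [CommRing k] [CommRing R] [CommRing S] [Algebra k R]
    [Algebra k S] [Algebra R S] [IsScalarTower k R S] (f : R) [IsLocalization.Away f S]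
    (hf : f ∈ R⁰) (ext : Derivation k R R → Derivation k S S)
    (hext : ∀ (δ : Derivation k R R) (r : R), ext δ (algebraMap R S r) = algebraMap R S (δ r))
    (L : Derivation k R R → Module.End k S[X])
    (hL : ∀ δ, IsTwistedAction (ext δ) (IsLocalization.Away.invSelf f * algebraMap R S (δ f))
      (L δ))
    (b : k[X])
    (hb : ∃ a ∈ Algebra.adjoin k
        (Set.range (fun r : R ↦ LinearMap.mulLeft k (C (algebraMap R S r))) ∪
          {LinearMap.mulLeft k X} ∪ Set.range L),
      b.map (algebraMap k S) = a (C (algebraMap R S f))) :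
    f ∣ algebraMap k R (b.eval (-1)) := by
  obtain ⟨a, ha, hab⟩ := hb
  set g : S := IsLocalization.Away.invSelf f
  have hfg : algebraMap R S f * g = 1 := IsLocalization.Away.mul_invSelf f
  have hgf : g * algebraMap R S f = 1 := (mul_comm _ _).trans hfg
  have hg (δ) : ext δ g = (-1 : k) • (g * algebraMap R S (δ f) * g) :=
    hext δ f ▸ derivation_apply_eq_neg_one_smul_of_mul_eq_one (ext δ) hgf
  have hinv : integralSubmodule R g (-1 : k) ∈ invtSubmodule a := by
    refine mem_invtSubmodule_of_mem_adjoin ?_ ha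
    rintro _ ((⟨r, rfl⟩ | rfl) | ⟨δ, rfl⟩)
    · exact integralSubmodule_mem_invtSubmodule_mulLeft_C g _ r
    · exact integralSubmodule_mem_invtSubmodule_mulLeft_X g _
    · exact (hL δ).integralSubmodule_mem_invtSubmodule (hext δ) (hg δ)
  have hf_mem : C (algebraMap R S f) ∈ integralSubmodule R g (-1 : k) :=
    mem_integralSubmodule.mpr ⟨1, by rw [specialization_C, hgf, map_one]⟩
  obtain ⟨r, hr⟩ := mem_integralSubmodule.mp (hinv hf_mem)
  rw [← hab, specialization_map] at hr
  refine ⟨r, IsLocalization.injective S (Submonoid.powers_le.mpr hf) ?_⟩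
  rw [map_mul, hr, ← mul_assoc, hfg, one_mul, ← IsScalarTower.algebraMap_apply]

/-- **Proposition 9.1.** `(s+1)` divides the Bernstein–Sato polynomial: with
`N = R_f[X]` the model of `R_f[s]f^s`, `A ⊆ End_k(N)` the image of `D_R[s]` (generated by
multiplications by elements of `R`, multiplication by `X`, and the twisted actions `L_δ`
of the `k`-derivations `δ` of `R`), if `b ∈ k[X]` satisfies `b(X)·1 ∈ A·(f·1)`, then
`b(-1) = 0`. -/
theorem stmt19 {k : Type*} [Field k] [IsAlgClosed k] [CharZero k]
    {R : Type*} [CommRing R] [IsDomain R] [Algebra k R]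
    (f : R) (hf0 : f ≠ 0) (hfu : ¬ IsUnit f)
    -- the unique extension of each `k`-derivation of `R` to a `k`-derivation of `R_f`
    (ext : Derivation k R R → Derivation k (Localization.Away f) (Localization.Away f))
    (hext : ∀ (δ : Derivation k R R) (r : R),
      ext δ (algebraMap R (Localization.Away f) r) =
        algebraMap R (Localization.Away f) (δ r))
    -- the twisted operator `L_δ(u) = δ'(u) + X·f⁻¹·δ(f)·u`, with `δ'` acting
    -- coefficientwise on `N = R_f[X]`
    (L : Derivation k R R → Module.End k (Polynomial (Localization.Away f)))
    (hL : ∀ (δ : Derivation k R R) (a : Localization.Away f) (m : ℕ),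
      L δ (Polynomial.C a * Polynomial.X ^ m) =
        Polynomial.C (ext δ a) * Polynomial.X ^ m +
          Polynomial.X * Polynomial.C (IsLocalization.Away.invSelf f *
            algebraMap R (Localization.Away f) (δ f)) *
            (Polynomial.C a * Polynomial.X ^ m))
    -- the algebra `A`: the action of `D_R[s]`
    (A : Subalgebra k (Module.End k (Polynomial (Localization.Away f))))
    (hA : A = Algebra.adjoin k
      ((Set.range fun r : R =>
          (LinearMap.mulLeft k (Polynomial.C (algebraMap R (Localization.Away f) r)) :
            Module.End k (Polynomial (Localization.Away f)))) ∪
        {(LinearMap.mulLeft k (Polynomial.X : Polynomial (Localization.Away f)) :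
            Module.End k (Polynomial (Localization.Away f)))} ∪
        Set.range L))
    (b : Polynomial k)
    (hb : ∃ a ∈ A, Polynomial.map (algebraMap k (Localization.Away f)) b =
      a (Polynomial.C (algebraMap R (Localization.Away f) f))) :
    Polynomial.eval (-1 : k) b = 0 := by
  refine not_ne_iff.mp fun hne ↦ hfu (isUnit_of_dvd_unit ?_ (hne.isUnit.map (algebraMap k R)))
  exact stmt19_general f (mem_nonZeroDivisors_of_ne_zero hf0) ext hext L hL b (hA ▸ hb)
end
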